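/- Let n : (0,ε₀) → ℕ satisfy n(ε)/log(1/ε) → ∞ and ε^{1/3}·n(ε) → 0 as ε↓0. Suppose each P_i(ε), 1 ≤ i ≤ n(ε), is stochastic, P̃ is an irreducible and aperiodic stochastic matrix with stationary distribution π̃, and sup_{1 ≤ i ≤ n(ε)} ‖P_i(ε) − (P̃ + ε(i−1)P̃⁽¹⁾)‖ = O(ε² n(ε)²) as ε↓0. Then for every probability row vector μ and column vector r, μ P_1(ε)P_2(ε)⋯P_{n(ε)}(ε) r = π̃ r + ε n(ε) π̃ P̃⁽¹⁾ (I − P̃ + Π̃)^{−1} r − ε π̃ P̃⁽¹⁾ (I − P̃ + Π̃)^{−2} r + O(ε² n(ε)³) as ε↓0. -/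

import Mathlib

open Matrix Topology Filter

/-- The matrix norm ‖A‖ = max_x Σ_y |A(x,y)|. -/
noncomputable def matNorm {T : Type*} [Fintype T] (A : Matrix T T ℝ) : ℝ :=
  ⨆ x, ∑ y, |A x y|

/-- A square matrix is stochastic if all entries are nonnegative and every row sums to 1. -/
def IsStochastic {T : Type*} [Fintype T] (P : Matrix T T ℝ) : Prop :=
  (∀ x y, 0 ≤ P x y) ∧ ∀ x, ∑ y, P x y = 1

/-- The ordered product P 1 * P 2 * ⋯ * P j. -/
noncomputable def prodP {T : Type*} [Fintype T] [DecidableEq T]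
    (P : ℕ → Matrix T T ℝ) (j : ℕ) : Matrix T T ℝ :=
  ((List.range j).map fun i => P (i + 1)).prod

/-!
Write `T` for `P̃`, `D` for `P̃⁽¹⁾`, `Π` for the matrix with all rows `π̃`, and `Z = (1 - T + Π)⁻¹`.
The telescoping sum `∏ A - T ^ n = ∑ l, (∏_{i < l} A i) * (A l - T) * T ^ (n - 1 - l)` has factors
`A l - T` that annihilate `Π`, so `T ^ k` may be replaced in it by `(T - Π) ^ k`, which decays like
`ρ ^ k`. Hence a uniform bound `κ` on `A l - T` gives `O(κ)`, not `O(n κ)`, for the whole sum.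
Feeding this back, `∏_{i < l} A i` may be replaced by `T ^ l` and then by `Π` at second order, and
`A l - T` by `ε l D`. What remains, `ε Π D ∑ l, l (T - Π) ^ (n - 1 - l)`, is summed in closed form
as `ε Π D (n Z - Z² + Z² (T - Π) ^ n)`. Since `n` outgrows `log (1 / ε)`, all terms of size `ρ ^ n`
are negligible.
-/

section Algebra

variable {R : Type*} [Ring R] {T E : R}

lemma list_prod_range_sub_pow (T : R) (A : ℕ → R) (n : ℕ) :
    ((List.range n).map A).prod - T ^ n =
      ∑ l ∈ Finset.range n, ((List.range l).map A).prod * (A l - T) * T ^ (n - 1 - l) := by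
  induction n with
  | zero => simp
  | succ n ih =>
    have shift : ∑ l ∈ Finset.range n,
        ((List.range l).map A).prod * (A l - T) * T ^ (n + 1 - 1 - l) =
          (((List.range n).map A).prod - T ^ n) * T := by
      rw [ih, Finset.sum_mul]
      refine Finset.sum_congr rfl fun l hl ↦ ?_
      have hl := Finset.mem_range.1 hl
      rw [show n + 1 - 1 - l = n - 1 - l + 1 by lia, pow_succ, mul_assoc _ _ T]
    rw [Finset.sum_range_succ, shift, List.prod_range_succ, pow_succ, Nat.add_sub_cancel,
      Nat.sub_self, pow_zero, mul_one]
    noncomm_ring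

lemma mul_pow_eq_mul_sub_pow {Y : R} (hTE : T * E = E) (hYE : Y * E = 0) (k : ℕ) :
    Y * T ^ k = Y * (T - E) ^ k := by
  induction k generalizing Y with
  | zero => simp only [pow_zero]
  | succ k ih =>
    rw [pow_succ', pow_succ', ← mul_assoc, ← mul_assoc, mul_sub, hYE, sub_zero,
      ih (by rw [mul_assoc, hTE, hYE])]

lemma list_prod_range_sub_pow_of_mul_eq (hTE : T * E = E) {A : ℕ → R} {n : ℕ}
    (hAE : ∀ l < n, A l * E = E) :
    ((List.range n).map A).prod - T ^ n =
      ∑ l ∈ Finset.range n, ((List.range l).map A).prod * (A l - T) * (T - E) ^ (n - 1 - l) := by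
  rw [list_prod_range_sub_pow]
  refine Finset.sum_congr rfl fun l hl ↦ mul_pow_eq_mul_sub_pow hTE ?_ _
  rw [mul_assoc, sub_mul, hAE l (Finset.mem_range.1 hl), hTE, sub_self, mul_zero]

lemma mul_pow_eq_of_mul_eq (hET : E * T = E) (k : ℕ) : E * T ^ k = E := by
  induction k with
  | zero => rw [pow_zero, mul_one]
  | succ k ih => rw [pow_succ', ← mul_assoc, hET, ih]

lemma sum_nsmul_pow_reflect {Q Z : R} (hZ : Z * (1 - Q) = 1) (n : ℕ) :
    ∑ l ∈ Finset.range n, l • Q ^ (n - 1 - l) = n • Z - Z ^ 2 + Z ^ 2 * Q ^ n := by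
  have hZQ : Z * Q = Z - 1 := by rw [← hZ, mul_sub, mul_one, sub_sub_cancel]
  have hZZQ : Z ^ 2 * Q = Z ^ 2 - Z := by rw [pow_two, mul_assoc, hZQ, mul_sub, mul_one]
  induction n with
  | zero => simp
  | succ n ih =>
    have shift : ∑ l ∈ Finset.range n, l • Q ^ (n + 1 - 1 - l) =
        (∑ l ∈ Finset.range n, l • Q ^ (n - 1 - l)) * Q := by
      rw [Finset.sum_mul]
      refine Finset.sum_congr rfl fun l hl ↦ ?_
      have hl := Finset.mem_range.1 hl
      rw [show n + 1 - 1 - l = n - 1 - l + 1 by lia, pow_succ, smul_mul_assoc]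
    rw [Finset.sum_range_succ, shift, ih, Nat.add_sub_cancel, Nat.sub_self, pow_zero, add_mul,
      sub_mul, smul_mul_assoc, hZQ, hZZQ, mul_assoc, ← pow_succ, succ_nsmul, smul_sub]
    abel

end Algebra

/-- The first-order expansion `Π + ε n Π D Z - ε Π D Z²` of a product of `n` factors close to
`T, T + ε D, …, T + (n - 1) ε D`, where `Π = lim T ^ k` and `Z` is the fundamental matrix
`(1 - T + Π)⁻¹`; the projection `Π` is written `E` here. -/
def initialExpansion {R : Type*} [Ring R] [Module ℝ R] (E D Z : R) (ε : ℝ) (n : ℕ) : R :=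
  E + (ε * n) • (E * D * Z) - ε • (E * D * Z ^ 2)

/-- Geometric ergodicity: `E` is an idempotent fixed by `T` on both sides, and
`T ^ k` approaches `E` at the rate `C * ρ ^ k`. The bound is put on `(T - E) ^ k`, which equals
`T ^ k - E` except at `k = 0`. -/
structure IsGeometricallyErgodic {R : Type*} [NormedRing R] (T E : R) (C ρ : ℝ) : Prop where
  mul_limit : T * E = E
  limit_mul : E * T = E
  limit_mul_limit : E * E = E
  rate_pos : 0 < ρ
  rate_lt_one : ρ < 1
  norm_sub_pow_le : ∀ k, ‖(T - E) ^ k‖ ≤ C * ρ ^ k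

lemma prod_sub_initialExpansion_eq {R : Type*} [Ring R] [Algebra ℝ R] {T E D Z : R}
    (hTE : T * E = E) (hZ : Z * (1 - (T - E)) = 1) {A : ℕ → R} {n : ℕ}
    (hAE : ∀ l < n, A l * E = E) (ε : ℝ) :
    ((List.range n).map A).prod - initialExpansion E D Z ε n =
      (T ^ n - E) +
      ∑ l ∈ Finset.range n, ((List.range l).map A).prod * (A l - (T + (ε * l) • D)) *
        (T - E) ^ (n - 1 - l) +
      ∑ l ∈ Finset.range n, (ε * l) • ((((List.range l).map A).prod - T ^ l) * D) *
        (T - E) ^ (n - 1 - l) +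
      ∑ l ∈ Finset.range n, (ε * l) • ((T ^ l - E) * D) * (T - E) ^ (n - 1 - l) +
      ε • (E * D * Z ^ 2 * (T - E) ^ n) := by
  set X : ℕ → R := fun j ↦ ((List.range j).map A).prod
  have leading : ε • (E * D * ∑ l ∈ Finset.range n, l • (T - E) ^ (n - 1 - l)) =
      ∑ l ∈ Finset.range n, (ε * l) • (E * D) * (T - E) ^ (n - 1 - l) := by
    rw [Finset.mul_sum, Finset.smul_sum]
    refine Finset.sum_congr rfl fun l _ ↦ ?_
    rw [smul_mul_assoc, mul_smul, mul_smul_comm, Nat.cast_smul_eq_nsmul]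
  have telescoped : X n - T ^ n =
      ∑ l ∈ Finset.range n, X l * (A l - (T + (ε * l) • D)) * (T - E) ^ (n - 1 - l) +
      ∑ l ∈ Finset.range n, (ε * l) • ((X l - T ^ l) * D) * (T - E) ^ (n - 1 - l) +
      ∑ l ∈ Finset.range n, (ε * l) • ((T ^ l - E) * D) * (T - E) ^ (n - 1 - l) +
      ε • (E * D * ∑ l ∈ Finset.range n, l • (T - E) ^ (n - 1 - l)) := by
    rw [list_prod_range_sub_pow_of_mul_eq hTE hAE, leading, ← Finset.sum_add_distrib,
      ← Finset.sum_add_distrib, ← Finset.sum_add_distrib]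
    refine Finset.sum_congr rfl fun l _ ↦ ?_
    rw [← add_mul, ← add_mul, ← add_mul]
    congr 1
    simp only [mul_sub, mul_add, sub_mul, mul_smul_comm, smul_sub]
    abel
  rw [← sub_add_sub_cancel (X n) (T ^ n), telescoped, sum_nsmul_pow_reflect hZ, initialExpansion]
  simp only [mul_add, mul_sub, smul_add, smul_sub, mul_smul_comm, mul_smul,
    Nat.cast_smul_eq_nsmul, mul_assoc]
  abel

lemma eventually_pow_le_pow_of_tendsto_div_log {n : ℝ → ℕ}
    (hn : Tendsto (fun ε ↦ (n ε : ℝ) / Real.log (1 / ε)) (𝓝[>] (0 : ℝ)) atTop)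
    {ρ : ℝ} (hρ0 : 0 < ρ) (hρ1 : ρ < 1) (k : ℕ) :
    ∀ᶠ ε in 𝓝[>] (0 : ℝ), ρ ^ n ε ≤ ε ^ k := by
  have hlogρ : 0 < -Real.log ρ := neg_pos.2 (Real.log_neg hρ0 hρ1)
  filter_upwards [hn.eventually_ge_atTop (k / -Real.log ρ), Ioo_mem_nhdsGT one_pos]
    with ε hnε ⟨hε0, hε1⟩
  have hlogε : 0 < -Real.log ε := neg_pos.2 (Real.log_neg hε0 hε1)
  rw [one_div, Real.log_inv, div_le_div_iff₀ hlogρ hlogε] at hnε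
  rw [← Real.log_le_log_iff (by positivity) (by positivity), Real.log_pow, Real.log_pow]
  linarith

section Ergodic

variable {R : Type*} [NormedRing R] {T E Q : R} {C ρ : ℝ}

lemma exists_norm_pow_le_of_norm_pow_lt_one {m : ℕ} (hm : m ≠ 0) (hQ : ‖Q ^ m‖ < 1) :
    ∃ C ρ : ℝ, 0 < ρ ∧ ρ < 1 ∧ ∀ k, ‖Q ^ k‖ ≤ C * ρ ^ k := by
  obtain ⟨a, hQa, ha1⟩ := exists_between hQ
  have ha0 : 0 < a := (norm_nonneg _).trans_lt hQa
  set ρ := a ^ ((m : ℝ)⁻¹)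
  have hρ0 : 0 < ρ := Real.rpow_pos_of_pos ha0 _
  have hρ1 : ρ < 1 := Real.rpow_lt_one ha0.le ha1 (by positivity)
  have hρm : ρ ^ m = a := Real.rpow_inv_natCast_pow ha0.le hm
  set B := ∑ i ∈ Finset.range m, ‖Q ^ i‖
  refine ⟨B / a, ρ, hρ0, hρ1, fun k ↦ ?_⟩
  induction k using Nat.strong_induction_on with
  | _ k ih =>
    rcases lt_or_ge k m with hkm | hmk
    · calc ‖Q ^ k‖
          ≤ B := Finset.single_le_sum (f := fun i ↦ ‖Q ^ i‖) (fun _ _ ↦ norm_nonneg _)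
            (Finset.mem_range.2 hkm)
        _ = B / a * ρ ^ m := by rw [hρm, div_mul_cancel₀ _ ha0.ne']
        _ ≤ B / a * ρ ^ k := by
          gcongr ?_ * ?_
          exact pow_le_pow_of_le_one hρ0.le hρ1.le hkm.le
    · obtain ⟨j, rfl⟩ := Nat.exists_eq_add_of_le hmk
      calc ‖Q ^ (m + j)‖
          ≤ ‖Q ^ m‖ * ‖Q ^ j‖ := pow_add Q m j ▸ norm_mul_le _ _
        _ ≤ a * (B / a * ρ ^ j) := by
          gcongr
          exact ih j (by lia)
        _ = B / a * ρ ^ (m + j) := by rw [pow_add, hρm]; ring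

lemma isUnit_one_sub_of_norm_pow_lt_one [HasSummableGeomSeries R] {m : ℕ} (hQ : ‖Q ^ m‖ < 1) :
    IsUnit (1 - Q) := by
  have hunit := isUnit_one_sub_of_norm_lt_one hQ
  have hcomm : Commute (1 - Q) (∑ i ∈ Finset.range m, Q ^ i) :=
    (mul_neg_geom_sum Q m).trans (geom_sum_mul_neg Q m).symm
  rw [← mul_neg_geom_sum, hcomm.isUnit_mul_iff] at hunit
  exact hunit.1

lemma norm_list_prod_range_le_one [NormOneClass R] {A : ℕ → R} {n : ℕ}
    (hA : ∀ l < n, ‖A l‖ ≤ 1) : ‖((List.range n).map A).prod‖ ≤ 1 := by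
  rw [← Submonoid.mem_unitClosedBall]
  refine Submonoid.list_prod_mem _ (List.forall_mem_map.2 fun l hl ↦ ?_)
  exact (Submonoid.mem_unitClosedBall R).2 (hA l (List.mem_range.1 hl))

lemma norm_sub_le_of_norm_sub_add_smul_le [NormedAlgebra ℝ R] {A D : R} {c s t : ℝ}
    (hA : ‖A‖ ≤ 1) (hc : 0 ≤ c) (hs : 0 ≤ s) (hst : s ≤ t) (hAT : ‖A - (T + s • D)‖ ≤ c * t ^ 2) :
    ‖A - T‖ ≤ (c + ‖D‖ + 1 + ‖T‖) * t := by
  have ht := hs.trans hst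
  rcases le_total t 1 with ht1 | ht1
  · calc ‖A - T‖ = ‖(A - (T + s • D)) + s • D‖ := by congr 1; abel
      _ ≤ c * t ^ 2 + s * ‖D‖ := by
        grw [norm_add_le, hAT, norm_smul, Real.norm_of_nonneg hs]
      _ ≤ c * t + t * ‖D‖ := by
        gcongr
        exact pow_le_of_le_one ht ht1 two_ne_zero
      _ ≤ (c + ‖D‖ + 1 + ‖T‖) * t := by nlinarith [norm_nonneg T]
  · calc ‖A - T‖ ≤ 1 + ‖T‖ := by grw [norm_sub_le, hA]
      _ ≤ (1 + ‖T‖) * t := le_mul_of_one_le_right (by positivity) ht1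
      _ ≤ (c + ‖D‖ + 1 + ‖T‖) * t := by gcongr; linarith [norm_nonneg D]

namespace IsGeometricallyErgodic

lemma const_nonneg (h : IsGeometricallyErgodic T E C ρ) : 0 ≤ C :=
  (norm_nonneg _).trans (by simpa using h.norm_sub_pow_le 0)

lemma norm_pow_sub_le (h : IsGeometricallyErgodic T E C ρ) (k : ℕ) :
    ‖T ^ k - E‖ ≤ ‖1 - E‖ * C * ρ ^ k := by
  have hE : (1 - E) * E = 0 := by rw [sub_mul, one_mul, h.limit_mul_limit, sub_self]
  calc ‖T ^ k - E‖
      = ‖(1 - E) * (T - E) ^ k‖ := by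
        rw [← mul_pow_eq_mul_sub_pow h.mul_limit hE, sub_mul, one_mul,
          mul_pow_eq_of_mul_eq h.limit_mul]
    _ ≤ ‖1 - E‖ * (C * ρ ^ k) := (norm_mul_le _ _).trans (by gcongr; exact h.norm_sub_pow_le k)
    _ = ‖1 - E‖ * C * ρ ^ k := (mul_assoc _ _ _).symm

lemma norm_sum_mul_pow_reflect_le (h : IsGeometricallyErgodic T E C ρ) {Y : ℕ → R} {b : ℝ}
    (hb : 0 ≤ b) {n : ℕ} (hY : ∀ l < n, ‖Y l‖ ≤ b) :
    ‖∑ l ∈ Finset.range n, Y l * (T - E) ^ (n - 1 - l)‖ ≤ b * (C * (1 - ρ)⁻¹) := by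
  have hC := h.const_nonneg
  have hρ := h.rate_pos.le
  have geom : ∑ l ∈ Finset.range n, ρ ^ (n - 1 - l) ≤ (1 - ρ)⁻¹ := by
    rw [Finset.sum_range_reflect (fun k ↦ ρ ^ k), ← tsum_geometric_of_lt_one hρ h.rate_lt_one]
    exact (summable_geometric_of_lt_one hρ h.rate_lt_one).sum_le_tsum _ fun _ _ ↦ by positivity
  calc ‖∑ l ∈ Finset.range n, Y l * (T - E) ^ (n - 1 - l)‖
      ≤ ∑ l ∈ Finset.range n, b * (C * ρ ^ (n - 1 - l)) := by
        refine norm_sum_le_of_le _ fun l hl ↦ (norm_mul_le _ _).trans ?_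
        gcongr
        exacts [hY l (Finset.mem_range.1 hl), h.norm_sub_pow_le _]
    _ = b * (C * ∑ l ∈ Finset.range n, ρ ^ (n - 1 - l)) := by simp only [Finset.mul_sum]
    _ ≤ b * (C * (1 - ρ)⁻¹) := by gcongr

lemma norm_prod_sub_pow_le [NormOneClass R] (h : IsGeometricallyErgodic T E C ρ) {A : ℕ → R}
    {n : ℕ} {κ : ℝ} (hκ : 0 ≤ κ) (hA : ∀ l < n, ‖A l‖ ≤ 1) (hAE : ∀ l < n, A l * E = E)
    (hAT : ∀ l < n, ‖A l - T‖ ≤ κ) :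
    ‖((List.range n).map A).prod - T ^ n‖ ≤ κ * (C * (1 - ρ)⁻¹) := by
  rw [list_prod_range_sub_pow_of_mul_eq h.mul_limit hAE]
  refine h.norm_sum_mul_pow_reflect_le hκ fun l hl ↦ (norm_mul_le _ _).trans ?_
  rw [← one_mul κ]
  gcongr
  exacts [norm_list_prod_range_le_one fun i hi ↦ hA i (hi.trans hl), hAT l hl]

variable [NormedAlgebra ℝ R] {D Z : R} {A : ℕ → R} {n : ℕ} {ε c : ℝ}

lemma norm_sum_smul_pow_sub_mul_le (h : IsGeometricallyErgodic T E C ρ) (hε : 0 ≤ ε) (n : ℕ) :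
    ‖∑ l ∈ Finset.range n, (ε * l) • ((T ^ l - E) * D) * (T - E) ^ (n - 1 - l)‖ ≤
      ‖1 - E‖ * C * ‖D‖ * C * ρ⁻¹ * (ε * n ^ 2 * ρ ^ n) := by
  have hC := h.const_nonneg
  have hρ := h.rate_pos
  have term_le : ∀ l ∈ Finset.range n,
      ‖(ε * l) • ((T ^ l - E) * D) * (T - E) ^ (n - 1 - l)‖ ≤
        ‖1 - E‖ * C * ‖D‖ * C * ρ⁻¹ * (ε * n * ρ ^ n) := by
    intro l hl
    have hln := Finset.mem_range.1 hl
    calc ‖(ε * l) • ((T ^ l - E) * D) * (T - E) ^ (n - 1 - l)‖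
        ≤ ‖ε * l‖ * (‖T ^ l - E‖ * ‖D‖) * ‖(T - E) ^ (n - 1 - l)‖ := by
          grw [norm_mul_le, norm_smul, norm_mul_le (T ^ l - E)]
      _ ≤ ε * n * (‖1 - E‖ * C * ρ ^ l * ‖D‖) * (C * ρ ^ (n - 1 - l)) := by
          rw [Real.norm_of_nonneg (by positivity)]
          gcongr
          exacts [h.norm_pow_sub_le l, h.norm_sub_pow_le _]
      _ = ‖1 - E‖ * C * ‖D‖ * C * ρ⁻¹ * (ε * n * ρ ^ n) := by
          rw [show n = l + (n - 1 - l) + 1 by lia, pow_succ, pow_add,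
            show l + (n - 1 - l) + 1 - 1 - l = n - 1 - l by lia]
          field_simp
  calc _ ≤ ∑ _ ∈ Finset.range n, ‖1 - E‖ * C * ‖D‖ * C * ρ⁻¹ * (ε * n * ρ ^ n) :=
        norm_sum_le_of_le _ term_le
    _ = ‖1 - E‖ * C * ‖D‖ * C * ρ⁻¹ * (ε * n ^ 2 * ρ ^ n) := by
        rw [Finset.sum_const, Finset.card_range, nsmul_eq_mul]
        ring

variable [NormOneClass R]

lemma norm_sum_smul_prod_sub_pow_mul_le (h : IsGeometricallyErgodic T E C ρ) {κ : ℝ}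
    (hκ : 0 ≤ κ) (hε : 0 ≤ ε) (hA : ∀ l < n, ‖A l‖ ≤ 1) (hAE : ∀ l < n, A l * E = E)
    (hAT : ∀ l < n, ‖A l - T‖ ≤ κ) :
    ‖∑ l ∈ Finset.range n, (ε * l) • ((((List.range l).map A).prod - T ^ l) * D) *
      (T - E) ^ (n - 1 - l)‖ ≤ ‖D‖ * (C * (1 - ρ)⁻¹) ^ 2 * (ε * n * κ) := by
  have hG : 0 ≤ C * (1 - ρ)⁻¹ :=
    mul_nonneg h.const_nonneg (inv_nonneg.2 (sub_nonneg.2 h.rate_lt_one.le))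
  have factor_le : ∀ l < n, ‖(ε * l) • ((((List.range l).map A).prod - T ^ l) * D)‖ ≤
      ε * n * (κ * (C * (1 - ρ)⁻¹) * ‖D‖) := by
    intro l hl
    rw [norm_smul, Real.norm_of_nonneg (by positivity)]
    grw [norm_mul_le, hl,
      h.norm_prod_sub_pow_le hκ (fun i hi ↦ hA i (hi.trans hl)) (fun i hi ↦ hAE i (hi.trans hl))
        (fun i hi ↦ hAT i (hi.trans hl))]
  refine (h.norm_sum_mul_pow_reflect_le (by positivity) factor_le).trans_eq ?_
  ring

theorem exists_norm_prod_sub_initialExpansion_le (h : IsGeometricallyErgodic T E C ρ)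
    (D : R) (hZ : Z * (1 - (T - E)) = 1) (hc : 0 ≤ c) :
    ∃ K, ∀ (ε : ℝ) (n : ℕ) (A : ℕ → R), 0 < ε → ε < 1 → ρ ^ n ≤ ε ^ 2 →
      (∀ l < n, ‖A l‖ ≤ 1) → (∀ l < n, A l * E = E) →
      (∀ l < n, ‖A l - (T + (ε * l) • D)‖ ≤ c * (ε * n) ^ 2) →
      ‖((List.range n).map A).prod - initialExpansion E D Z ε n‖ ≤ K * (ε * n) ^ 2 := by
  set G := C * (1 - ρ)⁻¹
  refine ⟨‖1 - E‖ * C + c * G + ‖D‖ * G ^ 2 * (c + ‖D‖ + 1 + ‖T‖) +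
    ‖1 - E‖ * C * ‖D‖ * C * ρ⁻¹ + ‖E * D * Z ^ 2‖ * C, ?_⟩
  intro ε n A hε hε1 hρn hA hAE hAD
  have hC := h.const_nonneg
  have hρ := h.rate_pos
  have hn : n ≠ 0 := by
    rintro rfl
    exact (pow_zero ρ ▸ hρn).not_gt (pow_lt_one₀ hε.le hε1 two_ne_zero)
  have hρt : ρ ^ n ≤ (ε * n) ^ 2 := hρn.trans <| by
    gcongr
    exact le_mul_of_one_le_right hε.le (by exact_mod_cast hn.bot_lt)
  have hAT : ∀ l < n, ‖A l - T‖ ≤ (c + ‖D‖ + 1 + ‖T‖) * (ε * n) := fun l hl ↦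
    norm_sub_le_of_norm_sub_add_smul_le (hA l hl) hc (by positivity) (by gcongr) (hAD l hl)
  have power : ‖T ^ n - E‖ ≤ ‖1 - E‖ * C * (ε * n) ^ 2 := by
    grw [h.norm_pow_sub_le, hρt]
  have model_error : ‖∑ l ∈ Finset.range n, ((List.range l).map A).prod *
      (A l - (T + (ε * l) • D)) * (T - E) ^ (n - 1 - l)‖ ≤ c * G * (ε * n) ^ 2 := by
    refine (h.norm_sum_mul_pow_reflect_le (b := c * (ε * n) ^ 2) (by positivity)
      fun l hl ↦ ?_).trans_eq (by ring)
    grw [norm_mul_le, norm_list_prod_range_le_one fun i hi ↦ hA i (hi.trans hl), hAD l hl,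
      one_mul]
  have second_order := h.norm_sum_smul_prod_sub_pow_mul_le (D := D) (by positivity) hε.le hA hAE hAT
  have transient : ‖∑ l ∈ Finset.range n, (ε * l) • ((T ^ l - E) * D) *
      (T - E) ^ (n - 1 - l)‖ ≤ ‖1 - E‖ * C * ‖D‖ * C * ρ⁻¹ * (ε * n) ^ 2 := by
    grw [h.norm_sum_smul_pow_sub_mul_le hε.le, hρn]
    gcongr
    calc ε * n ^ 2 * ε ^ 2 = ε * (ε * n) ^ 2 := by ring
      _ ≤ (ε * n) ^ 2 := mul_le_of_le_one_left (by positivity) hε1.le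
  have tail : ‖ε • (E * D * Z ^ 2 * (T - E) ^ n)‖ ≤ ‖E * D * Z ^ 2‖ * C * (ε * n) ^ 2 := by
    grw [norm_smul, norm_mul_le, h.norm_sub_pow_le, hρt, Real.norm_of_nonneg hε.le, hε1, one_mul,
      ← mul_assoc]
  rw [prod_sub_initialExpansion_eq h.mul_limit hZ hAE]
  grw [norm_add_le, norm_add₄_le, power, model_error, second_order, transient, tail]
  exact le_of_eq (by ring)

theorem prod_sub_initialExpansion_isBigO (h : IsGeometricallyErgodic T E C ρ) {n : ℝ → ℕ}
    (hn : Tendsto (fun ε ↦ (n ε : ℝ) / Real.log (1 / ε)) (𝓝[>] (0 : ℝ)) atTop)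
    (D : R) (hZ : Z * (1 - (T - E)) = 1) (hc : 0 ≤ c) {A : ℝ → ℕ → R}
    (hA : ∀ᶠ ε in 𝓝[>] (0 : ℝ), ∀ l < n ε, ‖A ε l‖ ≤ 1)
    (hAE : ∀ᶠ ε in 𝓝[>] (0 : ℝ), ∀ l < n ε, A ε l * E = E)
    (hAD : ∀ᶠ ε in 𝓝[>] (0 : ℝ), ∀ l < n ε,
      ‖A ε l - (T + (ε * l) • D)‖ ≤ c * (ε * n ε) ^ 2) :
    (fun ε ↦ ((List.range (n ε)).map (A ε)).prod - initialExpansion E D Z ε (n ε))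
      =O[𝓝[>] 0] fun ε ↦ (ε * n ε) ^ 2 := by
  obtain ⟨K, hK⟩ := h.exists_norm_prod_sub_initialExpansion_le D hZ hc
  refine .of_bound K ?_
  filter_upwards [Ioo_mem_nhdsGT one_pos, hA, hAE, hAD,
    eventually_pow_le_pow_of_tendsto_div_log hn h.rate_pos h.rate_lt_one 2]
    with ε ⟨hε0, hε1⟩ hA hAE hAD hρ
  rw [Real.norm_of_nonneg (by positivity)]
  exact hK ε (n ε) (A ε) hε0 hε1 hρ hA hAE hAD

end IsGeometricallyErgodic

end Ergodic

section MarkovMatrix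

open scoped Matrix.Norms.Operator

variable {S : Type*} [Fintype S]

lemma matNorm_eq_norm (A : Matrix S S ℝ) : matNorm A = ‖A‖ := by
  simp only [matNorm, linfty_opNorm_def, Finset.sup_univ_eq_ciSup, NNReal.coe_iSup,
    NNReal.coe_sum, coe_nnnorm, Real.norm_eq_abs]

lemma norm_le_of_forall_sum_abs_le {A : Matrix S S ℝ} {b : ℝ} (hb : 0 ≤ b)
    (hA : ∀ x, ∑ y, |A x y| ≤ b) : ‖A‖ ≤ b :=
  matNorm_eq_norm A ▸ Real.iSup_le hA hb

lemma abs_dotProduct_le (μ v : S → ℝ) : |μ ⬝ᵥ v| ≤ (∑ x, |μ x|) * ‖v‖ := by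
  rw [dotProduct, Finset.sum_mul]
  refine (Finset.abs_sum_le_sum_abs _ _).trans (Finset.sum_le_sum fun x _ ↦ ?_)
  rw [abs_mul]
  gcongr
  exact norm_le_pi_norm v x

lemma mul_replicateRow_of_mulVec_one {A : Matrix S S ℝ} (hA : A *ᵥ 1 = 1) (v : S → ℝ) :
    A * replicateRow S v = replicateRow S v := by
  rw [← one_vecMulVec, mul_vecMulVec, hA]

lemma replicateRow_mulVec_one {v : S → ℝ} (hv : ∑ x, v x = 1) : replicateRow S v *ᵥ 1 = 1 := by
  rw [replicateRow_mulVec_eq_const, dotProduct_one, hv]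
  rfl

lemma vecMul_replicateRow {μ : S → ℝ} (hμ : ∑ x, μ x = 1) (v : S → ℝ) :
    μ ᵥ* replicateRow S v = v := by
  ext y
  simp only [vecMul, dotProduct, replicateRow_apply, ← Finset.sum_mul, hμ, one_mul]

lemma isBigO_dotProduct_mulVec (μ r : S → ℝ) {α : Type*} (l : Filter α) (F : α → Matrix S S ℝ) :
    (fun a ↦ μ ⬝ᵥ (F a *ᵥ r)) =O[l] F := by
  refine .of_bound ((∑ x, |μ x|) * ‖r‖) (.of_forall fun a ↦ ?_)
  grw [Real.norm_eq_abs, abs_dotProduct_le, linfty_opNorm_mulVec]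
  exact le_of_eq (by ring)

variable [DecidableEq S]

lemma isStochastic_iff_mem_rowStochastic {A : Matrix S S ℝ} :
    IsStochastic A ↔ A ∈ rowStochastic ℝ S :=
  mem_rowStochastic_iff_sum.symm

lemma norm_le_one_of_mem_rowStochastic {A : Matrix S S ℝ} (hA : A ∈ rowStochastic ℝ S) :
    ‖A‖ ≤ 1 := by
  refine norm_le_of_forall_sum_abs_le zero_le_one fun x ↦ ?_
  obtain ⟨hnonneg, hsum⟩ := mem_rowStochastic_iff_sum.1 hA
  simp only [abs_of_nonneg (hnonneg x _), hsum, le_refl]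

lemma exists_norm_sub_smul_replicateRow_single_lt_one {K : Matrix S S ℝ}
    (hK : K ∈ rowStochastic ℝ S) {y : S} (hy : ∀ x, 0 < K x y) :
    ∃ δ : ℝ, ‖K - δ • replicateRow S (Pi.single y 1)‖ < 1 := by
  have : Nonempty S := ⟨y⟩
  obtain ⟨z, hz⟩ := Finite.exists_min fun x ↦ K x y
  set B : Matrix S S ℝ := K - K z y • replicateRow S (Pi.single y 1)
  have hB_nonneg (x w : S) : 0 ≤ B x w := by
    rcases eq_or_ne w y with rfl | hwy
    · simpa [B] using hz x
    · simpa [B, hwy] using nonneg_of_mem_rowStochastic hK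
  have hB_sum (x : S) : ∑ w, |B x w| = 1 - K z y := by
    simp only [abs_of_nonneg (hB_nonneg x _)]
    simp [B, sum_row_of_mem_rowStochastic hK, ← Finset.mul_sum]
  have hKz : K z y ≤ 1 := le_one_of_mem_rowStochastic hK
  exact ⟨K z y, (norm_le_of_forall_sum_abs_le (sub_nonneg.2 hKz) fun x ↦ (hB_sum x).le).trans_lt
    (sub_lt_self 1 (hy z))⟩

/- `T - Π` annihilates both `Π` and the rank-one matrices `F` with constant columns, so
`(T - Π) ^ (N * m + 1) = (T - Π) * T ^ (N * m) = (T - Π) * (T ^ N - F) ^ m`; taking `F` to be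
Doeblin's minorant of `T ^ N` makes the last factor a strict contraction. -/
lemma exists_norm_sub_replicateRow_pow_lt_one {T : Matrix S S ℝ} (hT : T ∈ rowStochastic ℝ S)
    {N : ℕ} {y : S} (hy : ∀ x, 0 < (T ^ N) x y) {π : S → ℝ} (hπ : ∑ x, π x = 1) :
    ∃ m ≠ 0, ‖(T - replicateRow S π) ^ m‖ < 1 := by
  have : Nonempty S := ⟨y⟩
  set E := replicateRow S π
  set Y := T - E
  obtain ⟨δ, hδ⟩ := exists_norm_sub_smul_replicateRow_single_lt_one (pow_mem hT N) hy
  set F : Matrix S S ℝ := δ • replicateRow S (Pi.single y 1)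
  obtain ⟨m, hm⟩ := exists_pow_lt_of_lt_one (inv_pos.2 (by positivity : 0 < ‖Y‖ + 1)) hδ
  have hT1 := one_vecMul_of_mem_rowStochastic hT
  have hE1 : E *ᵥ 1 = 1 := replicateRow_mulVec_one hπ
  have hYE : Y * E = 0 := by
    rw [sub_mul, mul_replicateRow_of_mulVec_one hT1, mul_replicateRow_of_mulVec_one hE1, sub_self]
  have hYF : Y * F = 0 := by
    rw [mul_smul_comm, sub_mul, mul_replicateRow_of_mulVec_one hT1,
      mul_replicateRow_of_mulVec_one hE1, sub_self, smul_zero]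
  have hTF : T ^ N * F = F := by
    rw [mul_smul_comm, mul_replicateRow_of_mulVec_one
      (one_vecMul_of_mem_rowStochastic (pow_mem hT N))]
  refine ⟨N * m + 1, Nat.succ_ne_zero _, ?_⟩
  calc ‖Y ^ (N * m + 1)‖
      = ‖Y * (T ^ N - F) ^ m‖ := by
        rw [pow_succ', ← mul_pow_eq_mul_sub_pow (mul_replicateRow_of_mulVec_one hT1 π) hYE,
          pow_mul, mul_pow_eq_mul_sub_pow hTF hYF]
    _ ≤ ‖Y‖ * (‖Y‖ + 1)⁻¹ := by grw [norm_mul_le, norm_pow_le, hm]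
    _ < 1 := by rw [← div_eq_mul_inv, div_lt_one (by positivity)]; exact lt_add_one _

lemma exists_isGeometricallyErgodic_replicateRow {T : Matrix S S ℝ} (hT : T ∈ rowStochastic ℝ S)
    {N : ℕ} {y : S} (hy : ∀ x, 0 < (T ^ N) x y) {π : S → ℝ} (hπ : ∑ x, π x = 1)
    (hπT : π ᵥ* T = π) : ∃ C ρ, IsGeometricallyErgodic T (replicateRow S π) C ρ := by
  obtain ⟨m, hm, hlt⟩ := exists_norm_sub_replicateRow_pow_lt_one hT hy hπ
  obtain ⟨C, ρ, hρ0, hρ1, hbound⟩ := exists_norm_pow_le_of_norm_pow_lt_one hm hlt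
  exact ⟨C, ρ, mul_replicateRow_of_mulVec_one (one_vecMul_of_mem_rowStochastic hT) π,
    by rw [← replicateRow_vecMul, hπT],
    mul_replicateRow_of_mulVec_one (replicateRow_mulVec_one hπ) π, hρ0, hρ1, hbound⟩

lemma inv_one_sub_add_replicateRow_mul {T : Matrix S S ℝ} (hT : T ∈ rowStochastic ℝ S)
    {N : ℕ} {y : S} (hy : ∀ x, 0 < (T ^ N) x y) {π : S → ℝ} (hπ : ∑ x, π x = 1) :
    (1 - T + replicateRow S π)⁻¹ * (1 - (T - replicateRow S π)) = 1 := by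
  obtain ⟨m, -, hlt⟩ := exists_norm_sub_replicateRow_pow_lt_one hT hy hπ
  have : CompleteSpace (Matrix S S ℝ) := FiniteDimensional.complete ℝ _
  rw [← sub_add]
  refine nonsing_inv_mul _ ((isUnit_iff_isUnit_det _).1 ?_)
  rw [sub_add]
  exact isUnit_one_sub_of_norm_pow_lt_one hlt

lemma dotProduct_initialExpansion_mulVec {μ : S → ℝ} (hμ : ∑ x, μ x = 1) (π r : S → ℝ)
    (D Z : Matrix S S ℝ) (ε : ℝ) (n : ℕ) :
    μ ⬝ᵥ (initialExpansion (replicateRow S π) D Z ε n *ᵥ r) =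
      π ⬝ᵥ r + ε * n * (π ⬝ᵥ ((D * Z) *ᵥ r)) - ε * (π ⬝ᵥ ((D * Z ^ 2) *ᵥ r)) := by
  have average (v : S → ℝ) : μ ⬝ᵥ (replicateRow S π *ᵥ v) = π ⬝ᵥ v := by
    rw [dotProduct_mulVec, vecMul_replicateRow hμ]
  simp only [initialExpansion, mul_assoc, sub_mulVec, add_mulVec, smul_mulVec, ← mulVec_mulVec,
    dotProduct_sub, dotProduct_add, dotProduct_smul, smul_eq_mul, average]

theorem transient_expectation_initial_expansion_general
    {ε₀ : ℝ} (hε₀ : 0 < ε₀) {n : ℝ → ℕ}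
    (hn : Tendsto (fun ε ↦ (n ε : ℝ) / Real.log (1 / ε)) (𝓝[>] (0 : ℝ)) atTop)
    {P : ℕ → ℝ → Matrix S S ℝ} {Pt Pt1 : Matrix S S ℝ}
    (hstoch : ∀ ε : ℝ, 0 < ε → ε < ε₀ → ∀ i : ℕ, 1 ≤ i → i ≤ n ε → IsStochastic (P i ε))
    (hPt : IsStochastic Pt) (hcol : ∃ N y, ∀ x, 0 < (Pt ^ N) x y)
    {π : S → ℝ} (hπ : ∑ x, π x = 1) (hπP : π ᵥ* Pt = π)
    (happrox : ∃ c > (0 : ℝ), ∃ ε₁ > (0 : ℝ), ∀ ε : ℝ, 0 < ε → ε < ε₁ →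
      ∀ i : ℕ, 1 ≤ i → i ≤ n ε →
        matNorm (P i ε - (Pt + (ε * ((i : ℝ) - 1)) • Pt1)) ≤ c * ε ^ 2 * (n ε : ℝ) ^ 2)
    {μ : S → ℝ} (hμ : ∑ x, μ x = 1) (r : S → ℝ) :
    ∃ c > (0 : ℝ), ∃ ε₂ > (0 : ℝ), ∀ ε : ℝ, 0 < ε → ε < ε₂ →
      |μ ⬝ᵥ (prodP (fun k ↦ P k ε) (n ε) *ᵥ r) -
          (π ⬝ᵥ r +
            ε * n ε * (π ⬝ᵥ ((Pt1 * (1 - Pt + Matrix.of fun _ y ↦ π y)⁻¹) *ᵥ r)) -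
            ε * (π ⬝ᵥ ((Pt1 * (1 - Pt + Matrix.of fun _ y ↦ π y)⁻¹ ^ 2) *ᵥ r)))|
        ≤ c * ε ^ 2 * (n ε : ℝ) ^ 2 := by
  obtain ⟨N, y, hy⟩ := hcol
  obtain ⟨c, hc, ε₁, hε₁, happrox⟩ := happrox
  have : Nonempty S := ⟨y⟩
  rw [isStochastic_iff_mem_rowStochastic] at hPt
  obtain ⟨C, ρ, hergodic⟩ := exists_isGeometricallyErgodic_replicateRow hPt hy hπ hπP
  have hP : ∀ᶠ ε in 𝓝[>] (0 : ℝ), ∀ l < n ε, P (l + 1) ε ∈ rowStochastic ℝ S := by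
    filter_upwards [Ioo_mem_nhdsGT hε₀] with ε hε l hl
    exact isStochastic_iff_mem_rowStochastic.1 (hstoch ε hε.1 hε.2 (l + 1) (by lia) hl)
  have hPD : ∀ᶠ ε in 𝓝[>] (0 : ℝ), ∀ l < n ε,
      ‖P (l + 1) ε - (Pt + (ε * l) • Pt1)‖ ≤ c * (ε * n ε) ^ 2 := by
    filter_upwards [Ioo_mem_nhdsGT hε₁] with ε hε l hl
    simpa [matNorm_eq_norm, mul_pow, mul_assoc] using
      happrox ε hε.1 hε.2 (l + 1) (by lia) hl
  have expansion := hergodic.prod_sub_initialExpansion_isBigO hn Pt1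
    (inv_one_sub_add_replicateRow_mul hPt hy hπ) hc.le
    (hP.mono fun ε h l hl ↦ norm_le_one_of_mem_rowStochastic (h l hl))
    (hP.mono fun ε h l hl ↦ mul_replicateRow_of_mulVec_one
      (one_vecMul_of_mem_rowStochastic (h l hl)) π) hPD
  obtain ⟨K, hK, hbound⟩ := ((isBigO_dotProduct_mulVec μ r _ _).trans expansion).exists_pos
  obtain ⟨ε₂, hε₂, hbound⟩ := mem_nhdsGT_iff_exists_Ioo_subset.1 hbound.bound
  refine ⟨K, hK, ε₂, hε₂, fun ε hε0 hε ↦ ?_⟩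
  have hε := hbound ⟨hε0, hε⟩
  rwa [Set.mem_ofPred_eq, sub_mulVec, dotProduct_sub, dotProduct_initialExpansion_mulVec hμ,
    Real.norm_eq_abs, Real.norm_of_nonneg (by positivity), mul_pow, ← mul_assoc] at hε

end MarkovMatrix

/-- Theorem 4: first-order approximation of μ P₁(ε)⋯P_{n(ε)}(ε) r for moderate
horizons n(ε), expanding around the initial transition matrix P̃, with error
O(ε² n(ε)³) as ε ↓ 0. -/
theorem transient_expectation_initial_expansion
    {S : Type*} [Fintype S] [Nonempty S] [DecidableEq S]
    (ε₀ : ℝ) (hε₀ : 0 < ε₀) (n : ℝ → ℕ)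
    (hn1 : Tendsto (fun ε => (n ε : ℝ) / Real.log (1/ε)) (𝓝[>] (0:ℝ)) atTop)
    (hn2 : Tendsto (fun ε => ε ^ ((1:ℝ)/3) * (n ε : ℝ)) (𝓝[>] (0:ℝ)) (𝓝 0))
    (P : ℕ → ℝ → Matrix S S ℝ) (Pt Pt1 : Matrix S S ℝ)
    (hstoch : ∀ ε : ℝ, 0 < ε → ε < ε₀ → ∀ i : ℕ, 1 ≤ i → i ≤ n ε → IsStochastic (P i ε))
    (hPt : IsStochastic Pt)
    (hirr : ∃ N : ℕ, ∀ x y, 0 < (Pt ^ N) x y)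
    (π : S → ℝ) (hπ0 : ∀ x, 0 ≤ π x) (hπ1 : ∑ x, π x = 1) (hπP : π ᵥ* Pt = π)
    (happrox : ∃ c > (0:ℝ), ∃ ε₁ > (0:ℝ), ∀ ε : ℝ, 0 < ε → ε < ε₁ →
      ∀ i : ℕ, 1 ≤ i → i ≤ n ε →
        matNorm (P i ε - (Pt + (ε * ((i : ℝ) - 1)) • Pt1)) ≤ c * ε ^ 2 * (n ε : ℝ) ^ 2) :
    ∀ μ r : S → ℝ, (∀ x, 0 ≤ μ x) → (∑ x, μ x = 1) →
      ∃ c > (0:ℝ), ∃ ε₂ > (0:ℝ), ∀ ε : ℝ, 0 < ε → ε < ε₂ →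
        |μ ⬝ᵥ (prodP (fun k => P k ε) (n ε) *ᵥ r) -
            (π ⬝ᵥ r +
              ε * (n ε : ℝ) *
                (π ⬝ᵥ ((Pt1 * (1 - Pt + Matrix.of fun _ y => π y)⁻¹) *ᵥ r)) -
              ε * (π ⬝ᵥ ((Pt1 * ((1 - Pt + Matrix.of fun _ y => π y)⁻¹) ^ 2) *ᵥ r)))|
          ≤ c * ε ^ 2 * (n ε : ℝ) ^ 3 := by
  intro μ r _ hμ
  obtain ⟨N, hN⟩ := hirr
  obtain ⟨c, hc, ε₂, hε₂, hbound⟩ := transient_expectation_initial_expansion_general hε₀ hn1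
    hstoch hPt ⟨N, Classical.arbitrary S, (hN · _)⟩ hπ1 hπP happrox hμ r
  refine ⟨c, hc, ε₂, hε₂, fun ε hε0 hε ↦ (hbound ε hε0 hε).trans ?_⟩
  rcases (n ε).eq_zero_or_pos with hzero | hpos
  · simp [hzero]
  · gcongr
    exacts [Nat.one_le_cast.2 hpos, Nat.le_succ 2]
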